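/- arXiv:1405.0781 — 3 statements merged into one kernel-verified Lean document; each statement's English description precedes it below -/
import Mathlib

section
/- Assume ∑_{i=1}^m λ^{p_i} = 1 (i.e., the similarity dimension of E equals 1). Then the interior of E is nonempty if and only if the open set condition holds for {S_i}_{i=1}^m. -/
open Polynomial Filter

noncomputable section

namespace PVOSC

variable {m : ℕ}

/-- `λ⁻¹` is a Pisot (P.V.) number: an algebraic integer `> 1` all of whose
Galois conjugates other than itself have complex absolute value `< 1`. -/
def IsPisot (θ : ℝ) : Prop :=
  1 < θ ∧ IsIntegral ℤ θ ∧
    ∀ z : ℂ, aeval z (minpoly ℤ θ) = 0 → z ≠ (θ : ℂ) → ‖z‖ < 1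

/-- `p_σ` for a finite word `σ`. -/
def wordP (p : Fin m → ℕ) (σ : List (Fin m)) : ℕ := (σ.map p).sum

/-- The contracting similitude `S_i(x) = λ^{p_i} x + b_i`. -/
def Smap (lam : ℝ) (p : Fin m → ℕ) (b : Fin m → ℝ) (i : Fin m) : ℝ → ℝ :=
  fun x => lam ^ p i * x + b i

/-- `S_σ = S_{i₁} ∘ ⋯ ∘ S_{i_k}` for `σ = i₁ ⋯ i_k`. -/
def SW (lam : ℝ) (p : Fin m → ℕ) (b : Fin m → ℝ) (σ : List (Fin m)) : ℝ → ℝ :=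
  σ.foldr (fun i f => Smap lam p b i ∘ f) id

/-- `b_σ`, the translation part of `S_σ`. -/
def wordB (lam : ℝ) (p : Fin m → ℕ) (b : Fin m → ℝ) (σ : List (Fin m)) : ℝ :=
  SW lam p b σ 0

/-- `B = {0, b₁, …, b_m}`. -/
def Bset (b : Fin m → ℝ) : Set ℝ := insert 0 (Set.range b)

/-- `B − B`. -/
def BB (b : Fin m → ℝ) : Set ℝ := {x | ∃ u ∈ Bset b, ∃ v ∈ Bset b, x = u - v}

/-- `max_i |b_i|`. -/
def bmax (b : Fin m → ℝ) : ℝ := ⨆ i, |b i|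

/-- The set `𝒞`. -/
def Cset (lam : ℝ) (b : Fin m → ℝ) (T : ℕ) : Set ℝ :=
  {x | |x| ≤ (1 + lam ^ (1 - (T : ℤ))) * bmax b / (1 - lam) ∧
    ∃ R : ℝ[X], (∀ n, R.coeff n ∈ BB b) ∧ lam ^ (2 - (T : ℤ)) * x = R.eval lam⁻¹}

/-- The vertex set `Ξ = {n ∈ ℤ : |n| ≤ T−1} × 𝒞`. -/
def Xi (lam : ℝ) (b : Fin m → ℝ) (T : ℕ) : Set (ℤ × ℝ) :=
  {v | |v.1| ≤ (T : ℤ) - 1 ∧ v.2 ∈ Cset lam b T}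

/-- The open set condition. -/
def OSC (lam : ℝ) (p : Fin m → ℕ) (b : Fin m → ℝ) : Prop :=
  ∃ U : Set ℝ, U.Nonempty ∧ IsOpen U ∧ (⋃ i, Smap lam p b i '' U) ⊆ U ∧
    ∀ i j : Fin m, i ≠ j → Smap lam p b i '' U ∩ Smap lam p b j '' U = ∅

/-- The strong separation condition for the attractor `E`. -/
def SSC (lam : ℝ) (p : Fin m → ℕ) (b : Fin m → ℝ) (E : Set ℝ) : Prop :=
  ∀ i j : Fin m, i ≠ j → Smap lam p b i '' E ∩ Smap lam p b j '' E = ∅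

/-- Group law on `ℤ × ℝ`: `(p₁,c₁)·(p₂,c₂) = (p₁+p₂, λ^{p₁} c₂ + c₁)`. -/
def gmul (lam : ℝ) (u v : ℤ × ℝ) : ℤ × ℝ := (u.1 + v.1, lam ^ u.1 * v.2 + u.2)

/-- Inverse for the group law: `(p,c)⁻¹ = (−p, −λ^{−p} c)`. -/
def ginv (lam : ℝ) (u : ℤ × ℝ) : ℤ × ℝ := (-u.1, -(lam ^ (-u.1) * u.2))

/-- The group element `(p_σ, b_σ)` associated to a finite word `σ`. -/
def elem (lam : ℝ) (p : Fin m → ℕ) (b : Fin m → ℝ) (σ : List (Fin m)) : ℤ × ℝ :=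
  ((wordP p σ : ℤ), wordB lam p b σ)

/-- The sequence `(q_k, c_k)` with the recursive structure w.r.t. `({α_k}, {β_k})`:
`recSeq … k = (q_{k+1}, c_{k+1})`, i.e. index `k` corresponds to `(q_{k+1}, c_{k+1})`. -/
def recSeq (lam : ℝ) (p : Fin m → ℕ) (b : Fin m → ℝ) (α β : ℕ → List (Fin m)) : ℕ → ℤ × ℝ
  | 0 => gmul lam (ginv lam (elem lam p b (β 0))) (elem lam p b (α 0))
  | (k+1) => gmul lam (ginv lam (elem lam p b (β (k+1))))
      (gmul lam (recSeq lam p b α β k) (elem lam p b (α (k+1))))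

/-- The edge relation of the directed graph `G` on `Ξ`. -/
def edge (lam : ℝ) (p : Fin m → ℕ) (b : Fin m → ℝ) (T : ℕ) (u v : ℤ × ℝ) : Prop :=
  u ∈ Xi lam b T ∧ v ∈ Xi lam b T ∧
    ∃ α β : List (Fin m), 1 ≤ wordP p α ∧ wordP p α ≤ 2 * T - 1 ∧
      1 ≤ wordP p β ∧ wordP p β ≤ 2 * T - 1 ∧
      v.1 = (wordP p α : ℤ) + u.1 - (wordP p β : ℤ) ∧
      v.2 = lam ^ (-(wordP p β : ℤ)) * u.2 + lam ^ (u.1 - (wordP p β : ℤ)) * wordB lam p b α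
        - lam ^ (-(wordP p β : ℤ)) * wordB lam p b β

/-- `Λ = Ξ ∩ {(p_j − p_i, λ^{−p_i}(b_j − b_i)) : i ≠ j}`. -/
def Lam (lam : ℝ) (p : Fin m → ℕ) (b : Fin m → ℝ) (T : ℕ) : Set (ℤ × ℝ) :=
  Xi lam b T ∩ {v | ∃ i j : Fin m, i ≠ j ∧
    v = ((p j : ℤ) - (p i : ℤ), lam ^ (-(p i : ℤ)) * (b j - b i))}

/-- The length-`k` prefix of an infinite word `ω`. -/
def prefixList (ω : ℕ → Fin m) (k : ℕ) : List (Fin m) := (List.range k).map ω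

/-!
Write `μ` for Lebesgue measure. Since `∑ λ ^ p i = 1`, the pieces `S i '' A` of any set `A` have
total measure `μ A`.

As `E` is the union of its own pieces and has finite measure, these overlap in null sets only. The
open sets `S i '' interior E` are therefore disjoint, and `interior E`, if nonempty, witnesses the
open set condition.

Conversely, intersect an open set satisfying the open set condition with a large ball to get a
bounded witness `V`. Its disjoint pieces fill `V` up to a null set, hence densely, so
`closure V ⊆ ⋃ i, S i '' closure V`. As the maps contract, a point of `closure V` at maximal
distance from `E` must lie in `E`; thus `V ⊆ closure V ⊆ E`.
-/

section

open MeasureTheory Set Metric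
open scoped NNReal ENNReal

section OpenSetCondition

variable {ι α : Type*}

/-- The open set condition for an arbitrary family of self-maps of a topological space, of which
`OSC` is the instance for the family `Smap lam p b`. -/
def OpenSetCondition [TopologicalSpace α] (f : ι → α → α) : Prop :=
  ∃ U : Set α, U.Nonempty ∧ IsOpen U ∧ (∀ i, MapsTo (f i) U U) ∧
    Pairwise fun i j => Disjoint (f i '' U) (f j '' U)

theorem osc_iff_openSetCondition {lam : ℝ} {p : Fin m → ℕ} {b : Fin m → ℝ} :
    OSC lam p b ↔ OpenSetCondition (Smap lam p b) := by
  simp only [OSC, OpenSetCondition, iUnion_subset_iff, image_subset_iff, MapsTo, Pairwise,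
    disjoint_iff_inter_eq_empty]
  rfl

end OpenSetCondition

section Measure

variable {ι α : Type*} [MeasurableSpace α] {μ : Measure α}

theorem measure_iUnion_add_measure_inter_le_sum [Fintype ι] {A : ι → Set α}
    {i j : ι} (hij : i ≠ j) (hj : MeasurableSet (A j)) :
    μ (⋃ k, A k) + μ (A i ∩ A j) ≤ ∑ k, μ (A k) := by
  classical
  have hcover : ⋃ k, A k ⊆ (A i ∪ A j) ∪ ⋃ k ∈ ({i, j} : Finset ι)ᶜ, A k := by
    refine iUnion_subset fun k x hx => ?_
    by_cases hk : k ∈ ({i, j} : Finset ι)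
    · rcases Finset.mem_insert.1 hk with rfl | hk
      · exact .inl (.inl hx)
      · exact .inl (.inr (Finset.mem_singleton.1 hk ▸ hx))
    · exact .inr (mem_biUnion (Finset.mem_coe.2 (Finset.mem_compl.2 hk)) hx)
  calc μ (⋃ k, A k) + μ (A i ∩ A j)
      ≤ μ (A i ∪ A j) + ∑ k ∈ {i, j}ᶜ, μ (A k) + μ (A i ∩ A j) := by
        gcongr
        exact (measure_mono hcover).trans <| (measure_union_le _ _).trans <| by
          gcongr
          exact measure_biUnion_finset_le _ _
    _ = ∑ k ∈ {i, j}, μ (A k) + ∑ k ∈ {i, j}ᶜ, μ (A k) := by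
        rw [Finset.sum_pair hij, ← measure_union_add_inter (A i) hj]
        ring
    _ = ∑ k, μ (A k) := Finset.sum_add_sum_compl _ _

theorem pairwise_aedisjoint_of_sum_measure_le [Fintype ι] {A : ι → Set α}
    (hA : ∀ i, MeasurableSet (A i)) (hfin : μ (⋃ k, A k) ≠ ∞)
    (hsum : ∑ k, μ (A k) ≤ μ (⋃ k, A k)) : Pairwise fun i j => AEDisjoint μ (A i) (A j) := by
  intro i j hij
  have hle : μ (⋃ k, A k) + μ (A i ∩ A j) ≤ μ (⋃ k, A k) + 0 := by
    simpa using (measure_iUnion_add_measure_inter_le_sum hij (hA j)).trans hsum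
  exact le_zero_iff.1 ((ENNReal.add_le_add_iff_left hfin).1 hle)

theorem sum_measure_image_eq [Fintype ι] {f : ι → α → α} {c : ι → ℝ≥0∞}
    (hscale : ∀ i A, μ (f i '' A) = c i * μ A) (hc : ∑ i, c i = 1) (A : Set α) :
    ∑ i, μ (f i '' A) = μ A := by
  simp only [hscale, ← Finset.sum_mul, hc, one_mul]

theorem subset_closure_of_measure_le [TopologicalSpace α] [μ.IsOpenPosMeasure] {V W : Set α}
    (hV : IsOpen V) (hWV : W ⊆ V) (hW : MeasurableSet W) (hfin : μ V ≠ ∞) (hle : μ V ≤ μ W) :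
    V ⊆ closure W := by
  have hnull : μ (V \ W) = 0 :=
    ae_le_set.1 (ae_eq_of_subset_of_measure_ge hWV hle hW.nullMeasurableSet hfin).symm.le
  have hnull_closure : μ (V \ closure W) = 0 :=
    measure_mono_null (sdiff_subset_sdiff_right subset_closure) hnull
  exact sdiff_eq_empty.1 ((hV.sdiff isClosed_closure).eq_empty_of_measure_zero hnull_closure)

end Measure

section Contraction

variable {ι α : Type*} [PseudoMetricSpace α]

theorem infDist_le_mul_infDist_of_mapsTo {K : ℝ≥0} {g : α → α} (hg : LipschitzWith K g)
    {E : Set α} (hE : E.Nonempty) (hgE : MapsTo g E E) (x : α) :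
    infDist (g x) E ≤ K * infDist x E := by
  have : Nonempty E := hE.to_subtype
  rw [infDist_eq_iInf (s := E) (x := x), Real.mul_iInf_of_nonneg K.coe_nonneg]
  exact le_ciInf fun e => (infDist_le_dist_of_mem (hgE e.2)).trans (hg.dist_le_mul x e)

theorem subset_of_subset_iUnion_image {f : ι → α → α} {r : ι → ℝ≥0} (hr : ∀ i, r i < 1)
    (hf : ∀ i, LipschitzWith (r i) (f i)) {E F : Set α} (hE : IsClosed E) (hEne : E.Nonempty)
    (hfE : ∀ i, MapsTo (f i) E E) (hF : IsCompact F) (hFf : F ⊆ ⋃ i, f i '' F) : F ⊆ E := by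
  intro z hz
  obtain ⟨x, hx, hmax⟩ := hF.exists_isMaxOn ⟨z, hz⟩ (continuous_infDist_pt E).continuousOn
  obtain ⟨i, y, hy, rfl⟩ := mem_iUnion.1 (hFf hx)
  have hcontract : infDist (f i y) E ≤ r i * infDist (f i y) E :=
    (infDist_le_mul_infDist_of_mapsTo (hf i) hEne (hfE i) y).trans
      (mul_le_mul_of_nonneg_left (hmax hy) (r i).coe_nonneg)
  have hfar_le : infDist (f i y) E ≤ 0 := by
    have hri : (r i : ℝ) < 1 := hr i
    nlinarith
  exact (hE.mem_iff_infDist_zero hEne).2 (le_antisymm ((hmax hz).trans hfar_le) infDist_nonneg)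

theorem eventually_mapsTo_ball {K : ℝ≥0} (hK : K < 1) {g : α → α} (hg : LipschitzWith K g)
    (u : α) : ∀ᶠ R in atTop, MapsTo g (ball u R) (ball u R) := by
  have hK' : 0 < 1 - (K : ℝ) := sub_pos.2 hK
  filter_upwards [eventually_gt_atTop (dist (g u) u / (1 - K))] with R hR x hx
  calc dist (g x) u ≤ dist (g x) (g u) + dist (g u) u := dist_triangle _ _ _
    _ ≤ K * R + dist (g u) u := by gcongr; exact hg.dist_le_mul_of_le (mem_ball.1 hx).le
    _ < K * R + R * (1 - K) := by gcongr; exact (div_lt_iff₀ hK').1 hR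
    _ = R := by ring

theorem OpenSetCondition.exists_isBounded [Finite ι] {f : ι → α → α} {r : ι → ℝ≥0}
    (hr : ∀ i, r i < 1) (hf : ∀ i, LipschitzWith (r i) (f i)) (h : OpenSetCondition f) :
    ∃ V : Set α, Bornology.IsBounded V ∧ V.Nonempty ∧ IsOpen V ∧ (∀ i, MapsTo (f i) V V) ∧
      Pairwise fun i j => Disjoint (f i '' V) (f j '' V) := by
  obtain ⟨U, ⟨u, hu⟩, hUo, hUmaps, hUdisj⟩ := h
  have hball : ∀ᶠ R in atTop, ∀ i, MapsTo (f i) (ball u R) (ball u R) :=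
    eventually_all.2 fun i => eventually_mapsTo_ball (hr i) (hf i) u
  obtain ⟨R, hR, hRpos⟩ := (hball.and (eventually_gt_atTop 0)).exists
  exact ⟨U ∩ ball u R, isBounded_ball.subset inter_subset_right, ⟨u, hu, mem_ball_self hRpos⟩,
    hUo.inter isOpen_ball, fun i => (hUmaps i).inter_inter (hR i),
    fun _ _ hij => (hUdisj hij).mono (image_mono inter_subset_left) (image_mono inter_subset_left)⟩

end Contraction

section IteratedFunctionSystem

variable {ι α : Type*} {f : ι → α → α} {E : Set α}

theorem mapsTo_of_eq_iUnion_image (hEfix : E = ⋃ i, f i '' E) (i : ι) : MapsTo (f i) E E :=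
  mapsTo_iff_image_subset.2 ((subset_iUnion (fun i => f i '' E) i).trans hEfix.ge)

section Topology

variable [Fintype ι] [TopologicalSpace α] [T2Space α] [MeasurableSpace α] [OpensMeasurableSpace α]
  {μ : Measure α} [μ.IsOpenPosMeasure]

theorem openSetCondition_of_interior_nonempty [IsFiniteMeasureOnCompacts μ]
    (hf : ∀ i, Continuous (f i)) (hfo : ∀ i, IsOpenMap (f i)) (hE : IsCompact E)
    (hEfix : E = ⋃ i, f i '' E) (hsum : ∑ i, μ (f i '' E) ≤ μ E) (hint : (interior E).Nonempty) :
    OpenSetCondition f := by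
  have hoverlap : Pairwise fun i j => AEDisjoint μ (f i '' E) (f j '' E) :=
    pairwise_aedisjoint_of_sum_measure_le (fun i => (hE.image (hf i)).measurableSet)
      (hEfix ▸ hE.measure_lt_top.ne) (by rwa [← hEfix])
  refine ⟨interior E, hint, isOpen_interior,
    fun i => (hfo i).mapsTo_interior (mapsTo_of_eq_iUnion_image hEfix i), fun i j hij => ?_⟩
  have hopen : IsOpen (f i '' interior E ∩ f j '' interior E) :=
    (hfo i _ isOpen_interior).inter (hfo j _ isOpen_interior)
  exact disjoint_iff_inter_eq_empty.2 <| hopen.eq_empty_of_measure_zero <|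
    (hoverlap hij).mono (image_mono interior_subset) (image_mono interior_subset)

theorem closure_subset_iUnion_image_closure (hf : ∀ i, Continuous (f i))
    (hfo : ∀ i, IsOpenMap (f i)) {V : Set α} (hV : IsOpen V) (hVc : IsCompact (closure V))
    (hfin : μ V ≠ ∞) (hmaps : ∀ i, MapsTo (f i) V V)
    (hdisj : Pairwise fun i j => Disjoint (f i '' V) (f j '' V))
    (hsum : μ V ≤ ∑ i, μ (f i '' V)) : closure V ⊆ ⋃ i, f i '' closure V := by
  have hopen : ∀ i, IsOpen (f i '' V) := fun i => hfo i V hV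
  have hvol : μ V ≤ μ (⋃ i, f i '' V) := by
    rwa [measure_iUnion hdisj fun i => (hopen i).measurableSet, tsum_fintype]
  have hdense : V ⊆ closure (⋃ i, f i '' V) :=
    subset_closure_of_measure_le hV (iUnion_subset fun i => (hmaps i).image_subset)
      (isOpen_iUnion hopen).measurableSet hfin hvol
  calc closure V ⊆ closure (⋃ i, f i '' V) := closure_minimal hdense isClosed_closure
    _ = ⋃ i, f i '' closure V := by
        simp only [closure_iUnion_of_finite, image_closure_of_isCompact hVc (hf _).continuousOn]

end Topology

section Metric

variable [Fintype ι] [MetricSpace α] [ProperSpace α] [MeasurableSpace α] [OpensMeasurableSpace α]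
  {μ : Measure α} [μ.IsOpenPosMeasure] [IsFiniteMeasureOnCompacts μ] {r : ι → ℝ≥0}

theorem interior_nonempty_of_openSetCondition (hr : ∀ i, r i < 1)
    (hf : ∀ i, LipschitzWith (r i) (f i)) (hfo : ∀ i, IsOpenMap (f i))
    (hsum : ∀ A, μ A ≤ ∑ i, μ (f i '' A)) (hE : IsClosed E) (hEne : E.Nonempty)
    (hmaps : ∀ i, MapsTo (f i) E E) (hosc : OpenSetCondition f) : (interior E).Nonempty := by
  obtain ⟨V, hVb, hVne, hVo, hVmaps, hVdisj⟩ := hosc.exists_isBounded hr hf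
  have hself : closure V ⊆ ⋃ i, f i '' closure V :=
    closure_subset_iUnion_image_closure (fun i => (hf i).continuous) hfo hVo
      hVb.isCompact_closure hVb.measure_lt_top.ne hVmaps hVdisj (hsum V)
  have hVE : closure V ⊆ E :=
    subset_of_subset_iUnion_image hr hf hE hEne hmaps hVb.isCompact_closure hself
  exact hVne.mono (interior_maximal (subset_closure.trans hVE) hVo)

theorem stmt14_general (hr : ∀ i, r i < 1) (hf : ∀ i, LipschitzWith (r i) (f i))
    (hfo : ∀ i, IsOpenMap (f i)) {c : ι → ℝ≥0∞} (hscale : ∀ i A, μ (f i '' A) = c i * μ A)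
    (hc : ∑ i, c i = 1) (hE : IsCompact E) (hEne : E.Nonempty) (hEfix : E = ⋃ i, f i '' E) :
    (interior E).Nonempty ↔ OpenSetCondition f := by
  have hsum : ∀ A, ∑ i, μ (f i '' A) = μ A := sum_measure_image_eq hscale hc
  exact ⟨openSetCondition_of_interior_nonempty (fun i => (hf i).continuous) hfo hE hEfix
      (hsum E).le,
    interior_nonempty_of_openSetCondition hr hf hfo (fun A => (hsum A).ge) hE.isClosed hEne
      (mapsTo_of_eq_iUnion_image hEfix)⟩

end Metric

end IteratedFunctionSystem

section Smap

variable {lam : ℝ} {p : Fin m → ℕ} (b : Fin m → ℝ)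

theorem toNNReal_pow_lt_one (hlam0 : 0 ≤ lam) (hlam1 : lam < 1) (hp : ∀ i, 1 ≤ p i) (i : Fin m) :
    (lam ^ p i).toNNReal < 1 :=
  Real.toNNReal_lt_one.2 (pow_lt_one₀ hlam0 hlam1 (Nat.one_le_iff_ne_zero.1 (hp i)))

theorem sum_ofReal_pow_eq_one (hlam : 0 ≤ lam) (hsum : ∑ i, lam ^ p i = 1) :
    ∑ i, ENNReal.ofReal (lam ^ p i) = 1 := by
  rw [← ENNReal.ofReal_sum_of_nonneg fun i _ => pow_nonneg hlam (p i), hsum, ENNReal.ofReal_one]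

theorem lipschitzWith_Smap (hlam : 0 ≤ lam) (i : Fin m) :
    LipschitzWith (lam ^ p i).toNNReal (Smap lam p b i) :=
  .of_dist_le_mul fun x y => by
    simp only [Smap, dist_add_right, Real.dist_eq, ← mul_sub, abs_mul,
      abs_of_nonneg (pow_nonneg hlam (p i)), Real.coe_toNNReal _ (pow_nonneg hlam (p i)), le_refl]

theorem isOpenMap_Smap (hlam : lam ≠ 0) (i : Fin m) : IsOpenMap (Smap lam p b i) :=
  (isOpenMap_add_right (b i)).comp (isOpenMap_smul₀ (pow_ne_zero (p i) hlam))

theorem volume_image_Smap (hlam : 0 ≤ lam) (i : Fin m) (A : Set ℝ) :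
    volume (Smap lam p b i '' A) = ENNReal.ofReal (lam ^ p i) * volume A := by
  have himage : Smap lam p b i '' A = (· + b i) '' ((lam ^ p i • ·) '' A) :=
    (image_image (· + b i) (lam ^ p i • ·) A).symm
  rw [himage, image_smul, image_add_right, measure_preimage_add_right,
    Measure.addHaar_smul_of_nonneg _ (pow_nonneg hlam _), Module.finrank_self, pow_one]

end Smap

end

theorem stmt14 (lam : ℝ) (hlam0 : 0 < lam) (hlam1 : lam < 1)
    (hPisot : IsPisot lam⁻¹)
    {m : ℕ} (hm : 2 ≤ m) (p : Fin m → ℕ) (hp : ∀ i, 1 ≤ p i)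
    (b : Fin m → ℝ) (hbQ : ∀ i, ∃ q : ℚ, b i = (q : ℝ))
    (E : Set ℝ) (hEc : IsCompact E) (hEne : E.Nonempty)
    (hEfix : E = ⋃ i, Smap lam p b i '' E)
    (hsum : ∑ i : Fin m, lam ^ (p i) = 1) :
    (interior E).Nonempty ↔ OSC lam p b := by
  rw [osc_iff_openSetCondition]
  exact stmt14_general (toNNReal_pow_lt_one hlam0.le hlam1 hp) (lipschitzWith_Smap b hlam0.le)
    (isOpenMap_Smap b hlam0.ne') (volume_image_Smap b hlam0.le)
    (sum_ofReal_pow_eq_one hlam0.le hsum) hEc hEne hEfix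

end PVOSC
end
end

section
/- Let d* = 2·max_i|b_i|/(1−λ)². Let α and β be finite words over {1,…,m}, let q ∈ ℤ with q ≥ 0 and c ∈ ℝ, and set (q',c') = (p_β,b_β)⁻¹·(q,c)·(p_α,b_α), so that c' = λ^{−p_β}c + λ^{−p_β}(λ^q·b_α − b_β). If |c| ≥ d*, then |c'| ≥ |c|. -/
open Polynomial Filter

noncomputable section

namespace PVOSC

variable {m : ℕ}

section

variable {lam : ℝ} {p : Fin m → ℕ}

theorem abs_le_bmax (b : Fin m → ℝ) (i : Fin m) : |b i| ≤ bmax b :=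
  le_ciSup (f := fun i => |b i|) (Set.finite_range _).bddAbove i

theorem bmax_nonneg (b : Fin m → ℝ) : 0 ≤ bmax b :=
  Real.iSup_nonneg fun _ => abs_nonneg _

theorem wordP_pos (hp : ∀ i, 1 ≤ p i) {σ : List (Fin m)} (hσ : σ ≠ []) : 0 < wordP p σ := by
  obtain ⟨i, τ, rfl⟩ := List.exists_cons_of_ne_nil hσ
  exact Nat.add_pos_left (hp i) _

theorem wordB_nil (lam : ℝ) (p : Fin m → ℕ) (b : Fin m → ℝ) : wordB lam p b [] = 0 := rfl

theorem wordB_cons (lam : ℝ) (p : Fin m → ℕ) (b : Fin m → ℝ) (i : Fin m) (σ : List (Fin m)) :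
    wordB lam p b (i :: σ) = lam ^ p i * wordB lam p b σ + b i := rfl

theorem abs_wordB_le (hlam0 : 0 ≤ lam) (hlam1 : lam < 1) (hp : ∀ i, 1 ≤ p i) (b : Fin m → ℝ)
    (σ : List (Fin m)) : |wordB lam p b σ| ≤ bmax b / (1 - lam) := by
  have hgap : 0 < 1 - lam := sub_pos.2 hlam1
  induction σ with
  | nil => simpa only [wordB_nil, abs_zero] using div_nonneg (bmax_nonneg b) hgap.le
  | cons i σ ih =>
    have hpow : lam ^ p i ≤ lam :=
      pow_le_of_le_one hlam0 hlam1.le (Nat.one_le_iff_ne_zero.1 (hp i))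
    calc |wordB lam p b (i :: σ)|
        ≤ |lam ^ p i * wordB lam p b σ| + |b i| := wordB_cons lam p b i σ ▸ abs_add_le _ _
      _ = lam ^ p i * |wordB lam p b σ| + |b i| := by
          rw [abs_mul, abs_of_nonneg (pow_nonneg hlam0 _)]
      _ ≤ lam * (bmax b / (1 - lam)) + bmax b := by gcongr; exact abs_le_bmax b i
      _ = bmax b / (1 - lam) := by field_simp; ring

theorem abs_zpow_mul_wordB_sub_wordB_le (hlam0 : 0 < lam) (hlam1 : lam < 1)
    (hp : ∀ i, 1 ≤ p i) (b : Fin m → ℝ) (α β : List (Fin m)) {q : ℤ} (hq : 0 ≤ q) :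
    |lam ^ q * wordB lam p b α - wordB lam p b β| ≤ 2 * bmax b / (1 - lam) := by
  have hpow_nonneg : 0 ≤ lam ^ q := zpow_nonneg hlam0.le q
  have hpow_le_one : lam ^ q ≤ 1 := zpow_le_one₀ hlam0 hlam1.le hq
  calc |lam ^ q * wordB lam p b α - wordB lam p b β|
      ≤ |lam ^ q * wordB lam p b α| + |wordB lam p b β| := abs_sub _ _
    _ = lam ^ q * |wordB lam p b α| + |wordB lam p b β| := by
        rw [abs_mul, abs_of_nonneg hpow_nonneg]
    _ ≤ |wordB lam p b α| + |wordB lam p b β| := by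
        gcongr; exact mul_le_of_le_one_left (abs_nonneg _) hpow_le_one
    _ ≤ bmax b / (1 - lam) + bmax b / (1 - lam) :=
        add_le_add (abs_wordB_le hlam0.le hlam1 hp b α) (abs_wordB_le hlam0.le hlam1 hp b β)
    _ = 2 * bmax b / (1 - lam) := by ring

theorem gmul_ginv_gmul_snd (lam : ℝ) (u v w : ℤ × ℝ) :
    (gmul lam (ginv lam u) (gmul lam v w)).2 =
      lam ^ (-u.1) * (v.2 + (lam ^ v.1 * w.2 - u.2)) := by
  simp only [gmul, ginv]
  ring

theorem abs_le_abs_inv_mul_add {K : Type*} [Field K] [LinearOrder K] [IsStrictOrderedRing K]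
    {r c e : K} (hr : 0 < r) (he : |e| ≤ (1 - r) * |c|) : |c| ≤ |r⁻¹ * (c + e)| := by
  rw [abs_mul, abs_inv, abs_of_pos hr, le_inv_mul_iff₀ hr]
  linarith [abs_sub_abs_le_abs_add c e]

/-- The translation parts `b_σ` perturb `c` by at most `(1 - λ) d* ≤ (1 - λ) |c|`, which leaves at
least `λ |c|`; since `β` is nonempty, the factor `λ ^ (-p_β) ≥ λ⁻¹` makes up for this loss. -/
theorem stmt15_general (hlam0 : 0 < lam) (hlam1 : lam < 1) (hp : ∀ i, 1 ≤ p i) (b : Fin m → ℝ)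
    (α : List (Fin m)) {β : List (Fin m)} (hβ : β ≠ []) {q : ℤ} (hq : 0 ≤ q) {c : ℝ}
    (hc : 2 * bmax b / (1 - lam) ^ 2 ≤ |c|) :
    |c| ≤ |(gmul lam (ginv lam (elem lam p b β)) (gmul lam (q, c) (elem lam p b α))).2| := by
  have hgap : 0 < 1 - lam := sub_pos.2 hlam1
  have hpow : lam ^ wordP p β ≤ lam :=
    pow_le_of_le_one hlam0.le hlam1.le (wordP_pos hp hβ).ne'
  have hperturb : |lam ^ q * wordB lam p b α - wordB lam p b β| ≤
      (1 - lam ^ wordP p β) * |c| :=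
    calc |lam ^ q * wordB lam p b α - wordB lam p b β|
        ≤ 2 * bmax b / (1 - lam) := abs_zpow_mul_wordB_sub_wordB_le hlam0 hlam1 hp b α β hq
      _ = (1 - lam) * (2 * bmax b / (1 - lam) ^ 2) := by field_simp
      _ ≤ (1 - lam) * |c| := by gcongr
      _ ≤ (1 - lam ^ wordP p β) * |c| := by gcongr
  rw [gmul_ginv_gmul_snd]
  simpa only [elem, zpow_neg, zpow_natCast] using
    abs_le_abs_inv_mul_add (pow_pos hlam0 _) hperturb

end

theorem stmt15 (lam : ℝ) (hlam0 : 0 < lam) (hlam1 : lam < 1)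
    {m : ℕ} (hm : 2 ≤ m) (p : Fin m → ℕ) (hp : ∀ i, 1 ≤ p i)
    (b : Fin m → ℝ) (hbZ : ∀ i, ∃ z : ℤ, b i = (z : ℝ))
    (α β : List (Fin m)) (hα : α ≠ []) (hβ : β ≠ [])
    (q : ℤ) (hq : 0 ≤ q) (c : ℝ)
    (hc : 2 * bmax b / (1 - lam) ^ 2 ≤ |c|) :
    |c| ≤ |(gmul lam (ginv lam (elem lam p b β)) (gmul lam (q, c) (elem lam p b α))).2| := by
  exact stmt15_general hlam0 hlam1 hp b α hβ hq hc

end PVOSC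
end
end

section
/- Let d be a real number with d ≥ 2·max_i|b_i|/(λ⁻¹ − 1). For k ∈ ℕ define 𝒟_k = {y ∈ ℝ : |y| ≤ d and y = R(λ⁻¹) for some polynomial R with all coefficients in B−B and deg R ≤ k}. Then for every k ≥ 1, 𝒟_k = {y ∈ ℝ : |y| ≤ d} ∩ (λ⁻¹·𝒟_{k−1} + (B−B)), where λ⁻¹·𝒟_{k−1} + (B−B) = {λ⁻¹y' + b : y' ∈ 𝒟_{k−1}, b ∈ B−B}. -/
open Polynomial Filter

noncomputable section

namespace PVOSC

variable {m : ℕ}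

/-- The set `𝒟_k` of values `R(λ⁻¹)`, `R` a polynomial with coefficients in `B − B`
of degree at most `k`, lying in `[−d, d]`. -/
def Dset (lam : ℝ) {m : ℕ} (b : Fin m → ℝ) (d : ℝ) (k : ℕ) : Set ℝ :=
  {y | |y| ≤ d ∧ ∃ R : ℝ[X], (∀ n, R.coeff n ∈ BB b) ∧ R.natDegree ≤ k ∧ y = R.eval lam⁻¹}

/-!
Writing `R = X * Q + c`, with `c` the constant term of `R`, gives `R(θ) = θ * Q(θ) + c` for
`θ = λ⁻¹`, and every such `Q` and `c` arise. For `|c| ≤ 2 * max |b i|` the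
bound on `d` makes `y' ↦ θ * y' + c` map the complement of `[-d, d]` into itself: if
`|θ * y' + c| ≤ d` then `|θ| * |y'| ≤ d + |c| ≤ d + (|θ| - 1) * d = |θ| * d`.
-/

/-- The values at `θ` of the polynomials of degree at most `k` with coefficients in `A`. Membership
in `A` is required of all coefficients, including those beyond the degree, so the set is empty
unless `0 ∈ A`. -/
def polyValues {S : Type*} [Semiring S] (θ : S) (A : Set S) (k : ℕ) : Set S :=
  {y | ∃ R : S[X], (∀ n, R.coeff n ∈ A) ∧ R.natDegree ≤ k ∧ y = R.eval θ}

theorem mem_polyValues_succ_iff {S : Type*} [CommSemiring S] {θ : S} {A : Set S} {k : ℕ} {y : S} :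
    y ∈ polyValues θ A (k + 1) ↔ ∃ y' ∈ polyValues θ A k, ∃ c ∈ A, y = θ * y' + c := by
  constructor
  · rintro ⟨R, hR, hdeg, rfl⟩
    refine ⟨R.divX.eval θ, ⟨R.divX, fun n ↦ ?_, ?_, rfl⟩, R.coeff 0, hR 0, ?_⟩
    · rw [coeff_divX]
      exact hR (n + 1)
    · rw [natDegree_divX_eq_natDegree_tsub_one]
      exact Nat.sub_le_of_le_add hdeg
    · conv_lhs => rw [← R.X_mul_divX_add]
      rw [eval_add, eval_mul, eval_X, eval_C]
  · rintro ⟨_, ⟨Q, hQ, hdeg, rfl⟩, c, hc, rfl⟩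
    refine ⟨X * Q + C c, ?_, ?_, by rw [eval_add, eval_mul, eval_X, eval_C]⟩
    · rintro (_ | n)
      · simpa using hc
      · simpa using hQ n
    · rw [natDegree_add_C, add_comm k]
      exact natDegree_mul_le_of_le natDegree_X_le hdeg

theorem norm_le_of_norm_mul_add_le {K : Type*} [NormedDivisionRing K] {θ c y : K} {d : ℝ}
    (hθ : 1 < ‖θ‖) (hc : ‖c‖ ≤ d * (‖θ‖ - 1)) (hy : ‖θ * y + c‖ ≤ d) : ‖y‖ ≤ d := by
  refine le_of_mul_le_mul_left ?_ (zero_lt_one.trans hθ)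
  calc ‖θ‖ * ‖y‖ = ‖θ * y + c - c‖ := by rw [add_sub_cancel_right, norm_mul]
    _ ≤ ‖θ * y + c‖ + ‖c‖ := norm_sub_le _ _
    _ ≤ d + d * (‖θ‖ - 1) := add_le_add hy hc
    _ = ‖θ‖ * d := by ring

theorem abs_le_bmax_of_mem_Bset {b : Fin m → ℝ} {u : ℝ} (hu : u ∈ Bset b) : |u| ≤ bmax b := by
  rcases hu with rfl | ⟨i, rfl⟩
  · rw [abs_zero]
    exact Real.iSup_nonneg fun i ↦ abs_nonneg (b i)
  · exact le_ciSup (f := fun i ↦ |b i|) (Set.finite_range _).bddAbove i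

theorem abs_le_two_mul_bmax_of_mem_BB {b : Fin m → ℝ} {c : ℝ} (hc : c ∈ BB b) :
    |c| ≤ 2 * bmax b := by
  obtain ⟨u, hu, v, hv, rfl⟩ := hc
  calc |u - v| ≤ |u| + |v| := abs_sub u v
    _ ≤ bmax b + bmax b :=
      add_le_add (abs_le_bmax_of_mem_Bset hu) (abs_le_bmax_of_mem_Bset hv)
    _ = 2 * bmax b := (two_mul _).symm

theorem stmt18_general {K : Type*} [NormedField K] {θ : K} (hθ : 1 < ‖θ‖) {A : Set K} {M d : ℝ}
    (hA : ∀ a ∈ A, ‖a‖ ≤ M) (hd : M / (‖θ‖ - 1) ≤ d) (k : ℕ) :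
    {y | ‖y‖ ≤ d} ∩ polyValues θ A (k + 1) =
      {y | ‖y‖ ≤ d} ∩
        {y | ∃ y' ∈ {y | ‖y‖ ≤ d} ∩ polyValues θ A k, ∃ c ∈ A, y = θ * y' + c} := by
  have hM : M ≤ d * (‖θ‖ - 1) := (div_le_iff₀ (sub_pos.2 hθ)).1 hd
  ext y
  refine and_congr_right fun hy ↦ mem_polyValues_succ_iff.trans ⟨?_, ?_⟩
  · rintro ⟨y', hy', c, hc, rfl⟩
    exact ⟨y', ⟨norm_le_of_norm_mul_add_le hθ ((hA c hc).trans hM) hy, hy'⟩, c, hc, rfl⟩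
  · rintro ⟨y', ⟨-, hy'⟩, c, hc, rfl⟩
    exact ⟨y', hy', c, hc, rfl⟩

theorem stmt18 (lam : ℝ) (hlam0 : 0 < lam) (hlam1 : lam < 1)
    {m : ℕ} (hm : 2 ≤ m)
    (b : Fin m → ℝ) (hbZ : ∀ i, ∃ z : ℤ, b i = (z : ℝ))
    (d : ℝ) (hd : 2 * bmax b / (lam⁻¹ - 1) ≤ d) :
    ∀ k : ℕ, 1 ≤ k →
      Dset lam b d k =
        {y : ℝ | |y| ≤ d} ∩ {y : ℝ | ∃ y' ∈ Dset lam b d (k - 1), ∃ c ∈ BB b, y = lam⁻¹ * y' + c} := by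
  have hθ : 1 < lam⁻¹ := (one_lt_inv₀ hlam0).2 hlam1
  have hnorm : ‖lam⁻¹‖ = lam⁻¹ := Real.norm_of_nonneg (inv_nonneg.2 hlam0.le)
  rintro (_ | k) hk
  · exact absurd hk (by decide)
  · exact stmt18_general (hnorm.symm ▸ hθ) (fun _ ↦ abs_le_two_mul_bmax_of_mem_BB)
      (hnorm.symm ▸ hd) k

end PVOSC
end
end
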